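/- arXiv:1401.0684 — 4 statements merged into one kernel-verified Lean document; each statement's English description precedes it below -/
import Mathlib

section
/- In a triconnected 4-planar graph, every pair of distinct separating triangles T and T' is vertex-disjoint, i.e., V(T) ∩ V(T') = ∅. -/
open Set

universe u

/-- A topological embedding of a simple graph in the plane: vertices are mapped to
distinct points and every edge is realized by a simple arc joining the images of its
endpoints, such that two arcs of distinct edges meet only in common endpoints and no
vertex point lies in the interior of an arc. -/
structure PlaneEmbedding {V : Type u} (G : SimpleGraph V) where
  pos : V → ℝ × ℝ
  pos_inj : Function.Injective pos
  arc : ∀ ⦃u v : V⦄, G.Adj u v → Set (ℝ × ℝ)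
  arc_symm : ∀ ⦃u v : V⦄ (h : G.Adj u v), arc h.symm = arc h
  arc_curve : ∀ ⦃u v : V⦄ (h : G.Adj u v), ∃ f : ℝ → ℝ × ℝ,
    ContinuousOn f (Set.Icc 0 1) ∧ Set.InjOn f (Set.Icc 0 1) ∧
    f 0 = pos u ∧ f 1 = pos v ∧ f '' Set.Icc 0 1 = arc h
  arc_inter : ∀ ⦃u v w z : V⦄ (h₁ : G.Adj u v) (h₂ : G.Adj w z),
    s(u, v) ≠ s(w, z) → arc h₁ ∩ arc h₂ ⊆ ({pos u, pos v} ∩ {pos w, pos z} : Set (ℝ × ℝ))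
  pos_arc : ∀ ⦃u v : V⦄ (h : G.Adj u v) (w : V), pos w ∈ arc h → w = u ∨ w = v

/-- A graph is planar if it admits a topological embedding in the plane. -/
def SimpleGraph.IsPlanar {V : Type u} (G : SimpleGraph V) : Prop :=
  Nonempty (PlaneEmbedding G)

/-- The point set covered by a plane embedding. -/
def PlaneEmbedding.drawing {V : Type u} {G : SimpleGraph V} (E : PlaneEmbedding G) :
    Set (ℝ × ℝ) :=
  Set.range E.pos ∪ ⋃ (u : V) (v : V) (h : G.Adj u v), E.arc h

/-- A face of a plane embedding is a connected component of the complement of the drawing. -/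
def PlaneEmbedding.IsFace {V : Type u} {G : SimpleGraph V} (E : PlaneEmbedding G)
    (F : Set (ℝ × ℝ)) : Prop :=
  ∃ p, p ∉ E.drawing ∧ F = connectedComponentIn E.drawingᶜ p

/-- A vertex is incident to a face if its point lies on the boundary of the face. -/
def PlaneEmbedding.VertexOnFace {V : Type u} {G : SimpleGraph V} (E : PlaneEmbedding G)
    (v : V) (F : Set (ℝ × ℝ)) : Prop :=
  E.pos v ∈ closure F

/-- Maximum degree at most `d`. -/
def SimpleGraph.MaxDegreeLE {V : Type u} (G : SimpleGraph V) (d : ℕ) : Prop :=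
  ∀ v : V, (G.neighborSet v).ncard ≤ d

/-- A graph is triconnected (3-connected) if it has more than three vertices, is
connected, and stays connected after removing any two vertices. -/
def SimpleGraph.IsTriconnected {V : Type u} (G : SimpleGraph V) : Prop :=
  3 < Nat.card V ∧ G.Connected ∧
    ∀ u v : V, (G.induce {w : V | w ≠ u ∧ w ≠ v}).Connected

/-- A graph is biconnected (2-connected) if it has more than two vertices, is
connected, and stays connected after removing any single vertex. -/
def SimpleGraph.IsBiconnected {V : Type u} (G : SimpleGraph V) : Prop :=
  2 < Nat.card V ∧ G.Connected ∧ ∀ u : V, (G.induce {w : V | w ≠ u}).Connected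

/-- A graph is subhamiltonian if it is a spanning subgraph of a planar hamiltonian graph. -/
def SimpleGraph.IsSubhamiltonian {V : Type u} [Fintype V] (G : SimpleGraph V) : Prop :=
  ∃ H : SimpleGraph V, G ≤ H ∧ H.IsPlanar ∧ (letI := Classical.decEq V; H.IsHamiltonian)

/-- The graph consisting of the edges of the cyclic vertex sequence `σ`. -/
def cyclicSuccGraph {W : Type u} (σ : ZMod (Nat.card W) ≃ W) : SimpleGraph W :=
  SimpleGraph.fromRel fun u v => ∃ i, u = σ i ∧ v = σ (i + 1)

/-- The cyclic ordering `σ` of all vertices of `G` is a subhamiltonian cycle for `G` if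
adding the edges between consecutive vertices of `σ` keeps the graph planar. -/
def SimpleGraph.IsSubhamiltonianCycle {W : Type u} (G : SimpleGraph W)
    (σ : ZMod (Nat.card W) ≃ W) : Prop :=
  SimpleGraph.IsPlanar (G ⊔ cyclicSuccGraph σ)

/-- The edges (pairs of consecutive vertices) of the cyclic sequence `σ`. -/
def cycleEdges {W : Type u} (σ : ZMod (Nat.card W) ≃ W) : Set (Sym2 W) :=
  {e | ∃ i, e = s(σ i, σ (i + 1))}

/-- The subhamiltonian cycle `σ` crosses the face `F` at position `i` if the two
consecutive vertices `σ i` and `σ (i+1)` are both incident to `F` but not adjacent. -/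
def CrossesFaceAt {V : Type u} {G : SimpleGraph V} (E : PlaneEmbedding G)
    (σ : ZMod (Nat.card V) ≃ V) (F : Set (ℝ × ℝ)) (i : ZMod (Nat.card V)) : Prop :=
  E.VertexOnFace (σ i) F ∧ E.VertexOnFace (σ (i + 1)) F ∧ ¬ G.Adj (σ i) (σ (i + 1))

/-- A separating triangle: a triangle whose removal disconnects the graph. -/
def SimpleGraph.IsSepTriangle {V : Type u} (G : SimpleGraph V) (a b c : V) : Prop :=
  G.Adj a b ∧ G.Adj b c ∧ G.Adj a c ∧
    ¬ (G.induce {v : V | v ≠ a ∧ v ≠ b ∧ v ≠ c}).Connected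

section Triangle

variable {V : Type u} {G : SimpleGraph V} (E : PlaneEmbedding G) {a b c : V}

/-- The Jordan curve formed by the drawing of the triangle `a b c`. -/
def triangleDrawing (hab : G.Adj a b) (hbc : G.Adj b c) (hac : G.Adj a c) :
    Set (ℝ × ℝ) :=
  E.arc hab ∪ E.arc hbc ∪ E.arc hac

/-- The vertices strictly inside the triangle `a b c` (bounded side of the Jordan curve). -/
def insideTriangle (hab : G.Adj a b) (hbc : G.Adj b c) (hac : G.Adj a c) : Set V :=
  {v | v ≠ a ∧ v ≠ b ∧ v ≠ c ∧
    Bornology.IsBounded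
      (connectedComponentIn (triangleDrawing E hab hbc hac)ᶜ (E.pos v))}

/-- The vertices strictly outside the triangle `a b c` (unbounded side of the Jordan curve). -/
def outsideTriangle (hab : G.Adj a b) (hbc : G.Adj b c) (hac : G.Adj a c) : Set V :=
  {v | v ≠ a ∧ v ≠ b ∧ v ≠ c ∧
    ¬ Bornology.IsBounded
      (connectedComponentIn (triangleDrawing E hab hbc hac)ᶜ (E.pos v))}

end Triangle

/-!
In a triconnected graph, separating triangles are minimal separators. Let `S` and `T` be distinct
minimal separators that are cliques and share a vertex `a` of degree at most `|S| + 1`. As a clique,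
`T \ S` lies on one side `C` of `S`; let `D` be the other side. Likewise `S \ T` lies on one side
`C'` of `T`, with other side `D'`. Every vertex of a minimal separator has a neighbour on each side,
so the degree bound leaves `a` a single neighbour in `C`, and that neighbour belongs to `T`. The
neighbour of `a` in `D'` therefore lies in `D`, so `D ∩ D'` is nonempty. Edges leave `D ∩ D'` only
towards `S`, so minimality of `S` gives each vertex of `S \ T ⊆ C'` a neighbour in `D ∩ D' ⊆ D'`,
although no edge joins `C'` to `D'`.
-/

/-- A vertex separator: a set of vertices whose removal leaves a graph with at least two connected
components. Phrasing this with `Preconnected` excludes sets whose removal leaves no vertex. -/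
def IsVertexSeparator {V : Type*} (G : SimpleGraph V) (S : Set V) : Prop :=
  ¬ (G.induce Sᶜ).Preconnected

/-- A separation of `G` along `S`: a partition of the vertices outside `S` into two nonempty sides
`C` and `D` that no edge joins. A side may be a union of several components of `G - S`. -/
structure IsVertexSeparation {V : Type*} (G : SimpleGraph V) (S C D : Set V) : Prop where
  nonempty_left : C.Nonempty
  nonempty_right : D.Nonempty
  disjoint : Disjoint C D
  union_eq_compl : C ∪ D = Sᶜ
  not_adj : ∀ ⦃x⦄, x ∈ C → ∀ ⦃y⦄, y ∈ D → ¬ G.Adj x y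

section Separators

variable {V : Type*} {G : SimpleGraph V} {S T C D C' D' K A U : Set V} {a x : V}

theorem exists_adj_of_preconnected_induce (hU : (G.induce U).Preconnected)
    (hin : (U ∩ A).Nonempty) (hout : (U \ A).Nonempty) :
    ∃ x ∈ U ∩ A, ∃ y ∈ U \ A, G.Adj x y := by
  obtain ⟨u, huU, huA⟩ := hin
  obtain ⟨v, hvU, hvA⟩ := hout
  obtain ⟨p⟩ := hU ⟨u, huU⟩ ⟨v, hvU⟩
  obtain ⟨e, -, hfst, hsnd⟩ := p.exists_boundary_dart (Subtype.val ⁻¹' A) huA hvA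
  exact ⟨e.fst, ⟨e.fst.2, hfst⟩, e.snd, ⟨e.snd.2, hsnd⟩, e.adj⟩

theorem preconnected_induce_compl_sdiff_singleton (hS : Minimal (IsVertexSeparator G) S)
    (ha : a ∈ S) : (G.induce (S \ {a})ᶜ).Preconnected :=
  not_not.mp <| hS.not_prop_of_ssubset (sdiff_singleton_ssubset.mpr ha)

theorem nonempty_neighborSet_inter_of_minimal (hS : Minimal (IsVertexSeparator G) S)
    (ha : a ∈ S) (hA : A.Nonempty) (hAS : Disjoint A S)
    (hclosed : ∀ x ∈ A, G.neighborSet x ⊆ A ∪ S) : (G.neighborSet a ∩ A).Nonempty := by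
  obtain ⟨x, ⟨-, hxA⟩, y, ⟨hyS, hyA⟩, hxy⟩ :
      ∃ x ∈ (S \ {a})ᶜ ∩ A, ∃ y ∈ (S \ {a})ᶜ \ A, G.Adj x y := by
    refine exists_adj_of_preconnected_induce (preconnected_induce_compl_sdiff_singleton hS ha) ?_
      ⟨a, by simp, hAS.notMem_of_mem_right ha⟩
    exact hA.mono fun x hx => ⟨fun hxS => hAS.notMem_of_mem_left hx hxS.1, hx⟩
  have hya : y = a := by
    by_contra hne
    exact hyS ⟨(hclosed x hxA hxy).resolve_left hyA, hne⟩
  exact ⟨x, hya ▸ hxy.symm, hxA⟩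

namespace IsVertexSeparation

theorem symm (h : IsVertexSeparation G S C D) : IsVertexSeparation G S D C where
  nonempty_left := h.nonempty_right
  nonempty_right := h.nonempty_left
  disjoint := h.disjoint.symm
  union_eq_compl := by rw [union_comm, h.union_eq_compl]
  not_adj _ hx _ hy hxy := h.not_adj hy hx hxy.symm

theorem disjoint_separator_left (h : IsVertexSeparation G S C D) : Disjoint C S :=
  disjoint_compl_left.mono_left (h.union_eq_compl ▸ subset_union_left)

theorem mem_or_mem (h : IsVertexSeparation G S C D) (hx : x ∉ S) : x ∈ C ∨ x ∈ D :=
  h.union_eq_compl.ge hx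

theorem neighborSet_subset (h : IsVertexSeparation G S C D) (hx : x ∈ C) :
    G.neighborSet x ⊆ C ∪ S := fun _ hxy =>
  or_iff_not_imp_right.mpr fun hyS =>
    (h.mem_or_mem hyS).resolve_right fun hyD => h.not_adj hx hyD hxy

theorem subset_or_subset_of_isClique (h : IsVertexSeparation G S C D) (hK : G.IsClique K)
    (hKS : Disjoint K S) : K ⊆ C ∨ K ⊆ D := by
  by_contra! hcon
  obtain ⟨⟨x, hxK, hxC⟩, ⟨y, hyK, hyD⟩⟩ := And.imp not_subset.mp not_subset.mp hcon
  have hxD : x ∈ D := (h.mem_or_mem (hKS.notMem_of_mem_left hxK)).resolve_left hxC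
  have hyC : y ∈ C := (h.mem_or_mem (hKS.notMem_of_mem_left hyK)).resolve_right hyD
  exact h.not_adj hyC hxD (hK hyK hxK fun hyx => hxC (hyx ▸ hyC))

theorem nonempty_neighborSet_inter (h : IsVertexSeparation G S C D)
    (hS : Minimal (IsVertexSeparator G) S) (ha : a ∈ S) : (G.neighborSet a ∩ C).Nonempty :=
  nonempty_neighborSet_inter_of_minimal hS ha h.nonempty_left h.disjoint_separator_left
    fun _ => h.neighborSet_subset

theorem encard_add_encard_neighborSet_inter_le (h : IsVertexSeparation G S C D)
    (hS : G.IsClique S) (ha : a ∈ S) :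
    (S \ {a}).encard + ((G.neighborSet a ∩ C).encard + (G.neighborSet a ∩ D).encard) ≤
      (G.neighborSet a).encard := by
  have hSN : S \ {a} ⊆ G.neighborSet a := fun x hx => hS ha hx.1 (Ne.symm hx.2)
  have hCD : Disjoint (G.neighborSet a ∩ C) (G.neighborSet a ∩ D) :=
    h.disjoint.mono inter_subset_right inter_subset_right
  have hSCD : Disjoint (S \ {a}) (G.neighborSet a ∩ C ∪ G.neighborSet a ∩ D) :=
    (disjoint_union_right.mpr ⟨h.disjoint_separator_left.symm.mono_right inter_subset_right,
      h.symm.disjoint_separator_left.symm.mono_right inter_subset_right⟩).mono_left sdiff_subset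
  rw [← encard_union_eq hCD, ← encard_union_eq hSCD]
  exact encard_le_encard (union_subset hSN (union_subset inter_subset_left inter_subset_left))

theorem subsingleton_neighborSet_inter (h : IsVertexSeparation G S C D)
    (hS : Minimal (IsVertexSeparator G) S) (hclique : G.IsClique S) (hfin : S.Finite)
    (ha : a ∈ S) (hdeg : (G.neighborSet a).encard ≤ S.encard + 1) :
    (G.neighborSet a ∩ C).Subsingleton := by
  have hright : 1 ≤ (G.neighborSet a ∩ D).encard :=
    one_le_encard_iff_nonempty.mpr (h.symm.nonempty_neighborSet_inter hS ha)
  have hcount : (S \ {a}).encard + ((G.neighborSet a ∩ C).encard + 1) ≤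
      (S \ {a}).encard + (1 + 1) :=
    calc (S \ {a}).encard + ((G.neighborSet a ∩ C).encard + 1)
        ≤ (S \ {a}).encard + ((G.neighborSet a ∩ C).encard + (G.neighborSet a ∩ D).encard) := by
          gcongr
      _ ≤ (G.neighborSet a).encard := h.encard_add_encard_neighborSet_inter_le hclique ha
      _ ≤ S.encard + 1 := hdeg
      _ = (S \ {a}).encard + (1 + 1) := by
          rw [← encard_sdiff_singleton_add_one ha, add_assoc]
  rw [← encard_le_one_iff_subsingleton]
  exact (ENat.add_le_add_iff_right ENat.one_ne_top).mp <|
    (ENat.add_le_add_iff_left hfin.sdiff.encard_lt_top.ne).mp hcount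

theorem neighborSet_subset_inter_union (h : IsVertexSeparation G S C D)
    (h' : IsVertexSeparation G T C' D') (hTC : T \ S ⊆ C) (hx : x ∈ D ∩ D') :
    G.neighborSet x ⊆ D ∩ D' ∪ S := by
  intro y hxy
  refine or_iff_not_imp_right.mpr fun hyS => ?_
  have hyD : y ∈ D := (h.symm.neighborSet_subset hx.1 hxy).resolve_right hyS
  have hyT : y ∉ T := fun hyT => h.disjoint.notMem_of_mem_left (hTC ⟨hyT, hyS⟩) hyD
  exact ⟨hyD, (h'.symm.neighborSet_subset hx.2 hxy).resolve_right hyT⟩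

end IsVertexSeparation

theorem IsVertexSeparator.exists_isVertexSeparation (hS : IsVertexSeparator G S) :
    ∃ C D, IsVertexSeparation G S C D := by
  obtain ⟨x, y, hxy⟩ : ∃ x y, ¬ (G.induce Sᶜ).Reachable x y := by
    simpa only [IsVertexSeparator, SimpleGraph.Preconnected, not_forall] using hS
  refine ⟨Subtype.val '' {z | (G.induce Sᶜ).Reachable x z},
    Subtype.val '' {z | ¬ (G.induce Sᶜ).Reachable x z},
    ⟨x, x, .refl x, rfl⟩, ⟨y, y, hxy, rfl⟩, ?_, ?_, ?_⟩
  · rw [disjoint_image_iff Subtype.val_injective]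
    exact disjoint_compl_right
  · rw [← image_union]
    exact (congrArg _ (union_compl_self _)).trans (by rw [image_univ, Subtype.range_coe])
  · rintro _ ⟨u, hu, rfl⟩ _ ⟨v, hv, rfl⟩ huv
    exact hv (hu.trans (SimpleGraph.Adj.reachable (G := G.induce Sᶜ) huv))

theorem IsVertexSeparator.exists_isVertexSeparation_subset_left (hS : IsVertexSeparator G S)
    (hK : G.IsClique K) (hKS : Disjoint K S) : ∃ C D, IsVertexSeparation G S C D ∧ K ⊆ C := by
  obtain ⟨C, D, h⟩ := hS.exists_isVertexSeparation
  rcases h.subset_or_subset_of_isClique hK hKS with hC | hD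
  · exact ⟨C, D, h, hC⟩
  · exact ⟨D, C, h.symm, hD⟩

end Separators

theorem separating_triangles_vertex_disjoint_general {V : Type*} {G : SimpleGraph V}
    {S T : Set V} (hS : Minimal (IsVertexSeparator G) S) (hT : Minimal (IsVertexSeparator G) T)
    (hScl : G.IsClique S) (hTcl : G.IsClique T) (hfin : S.Finite)
    (hdeg : ∀ a ∈ S, (G.neighborSet a).encard ≤ S.encard + 1) (hne : S ≠ T) : Disjoint S T := by
  rw [disjoint_left]
  intro a haS haT
  obtain ⟨c, hcS, hcT⟩ : (S \ T).Nonempty :=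
    sdiff_nonempty.mpr fun hST => hne (hT.eq_of_subset hS.prop hST)
  obtain ⟨d, hdT, hdS⟩ : (T \ S).Nonempty :=
    sdiff_nonempty.mpr fun hTS => hne (hS.eq_of_subset hT.prop hTS).symm
  obtain ⟨C, D, h, hTC⟩ := hS.prop.exists_isVertexSeparation_subset_left
    (hTcl.subset sdiff_subset) disjoint_sdiff_self_left
  obtain ⟨C', D', h', hSC'⟩ := hT.prop.exists_isVertexSeparation_subset_left
    (hScl.subset sdiff_subset) disjoint_sdiff_self_left
  have hunique : (G.neighborSet a ∩ C).Subsingleton :=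
    h.subsingleton_neighborSet_inter hS hScl hfin haS (hdeg a haS)
  obtain ⟨x, hax, hxD'⟩ := h'.symm.nonempty_neighborSet_inter hT haT
  have hxT : x ∉ T := h'.symm.disjoint_separator_left.notMem_of_mem_left hxD'
  have hxS : x ∉ S := fun hxS => h'.disjoint.notMem_of_mem_left (hSC' ⟨hxS, hxT⟩) hxD'
  have had : G.Adj a d := hTcl haT hdT (ne_of_mem_of_not_mem haS hdS)
  have hxC : x ∉ C := fun hxC => hxT (hunique ⟨hax, hxC⟩ ⟨had, hTC ⟨hdT, hdS⟩⟩ ▸ hdT)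
  have hxD : x ∈ D := (h.mem_or_mem hxS).resolve_left hxC
  obtain ⟨y, hcy, -, hyD'⟩ : (G.neighborSet c ∩ (D ∩ D')).Nonempty :=
    nonempty_neighborSet_inter_of_minimal hS hcS ⟨x, hxD, hxD'⟩
      (h.symm.disjoint_separator_left.mono_left inter_subset_left)
      fun _ => h.neighborSet_subset_inter_union h' hTC
  exact h'.not_adj (hSC' ⟨hcS, hcT⟩) hyD' hcy

section Triconnected

variable {V : Type*} {G : SimpleGraph V} {R : Set V} {a b c : V}

theorem encard_neighborSet_le_of_maxDegreeLE [Finite V] {d : ℕ} (h : G.MaxDegreeLE d) (v : V) :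
    (G.neighborSet v).encard ≤ d :=
  encard_le_coe_iff_finite_ncard_le.mpr ⟨toFinite _, h v⟩

theorem preconnected_induce_compl_of_encard_le_two (h : G.IsTriconnected)
    (hR : R.encard ≤ 2) : (G.induce Rᶜ).Preconnected := by
  obtain rfl | ⟨u, hu⟩ := R.eq_empty_or_nonempty
  · rw [compl_empty]
    exact (SimpleGraph.induceUnivIso G).preconnected_iff.mpr h.2.1.preconnected
  have hpair : ∃ v, R = {u, v} := by
    rw [← encard_sdiff_singleton_add_one hu, ← one_add_one_eq_two,
      ENat.add_le_add_iff_right ENat.one_ne_top, encard_le_one_iff_eq] at hR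
    obtain hempty | ⟨v, hv⟩ := hR
    · exact ⟨u, by rw [← insert_sdiff_self_of_mem hu, hempty, insert_empty_eq, pair_eq_singleton]⟩
    · exact ⟨v, by rw [← insert_sdiff_self_of_mem hu, hv]⟩
  obtain ⟨v, rfl⟩ := hpair
  have hcompl : ({u, v} : Set V)ᶜ = {w | w ≠ u ∧ w ≠ v} := by ext; simp
  exact hcompl ▸ (h.2.2 u v).preconnected

theorem isClique_of_isSepTriangle (h : G.IsSepTriangle a b c) :
    G.IsClique {a, b, c} := by
  simp [SimpleGraph.isClique_insert, h.1, h.2.1, h.2.2.1]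

theorem encard_of_isSepTriangle (h : G.IsSepTriangle a b c) :
    ({a, b, c} : Set V).encard = 3 :=
  encard_eq_three.mpr ⟨a, b, c, h.1.ne, h.2.2.1.ne, h.2.1.ne, rfl⟩

theorem isVertexSeparator_of_isSepTriangle (hV : 3 < Nat.card V)
    (h : G.IsSepTriangle a b c) : IsVertexSeparator G {a, b, c} := by
  intro hpre
  have hcompl : ({a, b, c} : Set V)ᶜ = {v | v ≠ a ∧ v ≠ b ∧ v ≠ c} := by ext; simp
  have hne : ({a, b, c} : Set V)ᶜ.Nonempty := by
    rw [nonempty_compl]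
    intro huniv
    rw [← ncard_univ, ← huniv, ncard, encard_of_isSepTriangle h] at hV
    exact hV.false
  have := hne.to_subtype
  exact h.2.2.2 (hcompl ▸ ⟨hpre⟩)

theorem minimal_isVertexSeparator_of_isSepTriangle (h3 : G.IsTriconnected)
    (h : G.IsSepTriangle a b c) : Minimal (IsVertexSeparator G) {a, b, c} := by
  refine minimal_iff_forall_ssubset.mpr
    ⟨isVertexSeparator_of_isSepTriangle h3.1 h, fun R hR => not_not.mpr ?_⟩
  have hlt : R.encard < 2 + 1 :=
    ((toFinite _).subset hR.subset).encard_lt_encard hR |>.trans_eq (encard_of_isSepTriangle h)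
  exact preconnected_induce_compl_of_encard_le_two h3 (Order.le_of_lt_add_one hlt)

end Triconnected

/-- In a triconnected 4-planar graph, distinct separating triangles are
vertex disjoint. -/
theorem separating_triangles_vertex_disjoint {V : Type u} (G : SimpleGraph V)
    (h3 : G.IsTriconnected) (hplanar : G.IsPlanar) (hdeg : G.MaxDegreeLE 4)
    {a b c a' b' c' : V} (hT : G.IsSepTriangle a b c) (hT' : G.IsSepTriangle a' b' c')
    (hne : ({a, b, c} : Set V) ≠ ({a', b', c'} : Set V)) :
    ({a, b, c} : Set V) ∩ ({a', b', c'} : Set V) = ∅ := by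
  have : Finite V := Nat.finite_of_card_ne_zero (Nat.ne_zero_of_lt h3.1)
  exact disjoint_iff_inter_eq_empty.mp <| separating_triangles_vertex_disjoint_general
    (minimal_isVertexSeparator_of_isSepTriangle h3 hT)
    (minimal_isVertexSeparator_of_isSepTriangle h3 hT')
    (isClique_of_isSepTriangle hT) (isClique_of_isSepTriangle hT') (toFinite _)
    (fun v _ => encard_of_isSepTriangle hT ▸ encard_neighborSet_le_of_maxDegreeLE hdeg v) hne
end

section
/- Two distinct anchored trees T-bar and T'-bar share at most one common anchor. -/
open Set

universe u

section Blocks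

variable {V : Type u} {G : SimpleGraph V} {v0 : V}

/-- The point set covered by the drawing of the edges of a closed walk. -/
def cycleDrawing (E : PlaneEmbedding G) (w : G.Walk v0 v0) : Set (ℝ × ℝ) :=
  {p | ∃ (u v : V) (h : G.Adj u v), s(u, v) ∈ w.edges ∧ p ∈ E.arc h}

/-- The vertices of `G` strictly inside the cycle `w` (in the bounded part of the
complement of the Jordan curve drawn by `w`). -/
def insideCycle (E : PlaneEmbedding G) (w : G.Walk v0 v0) : Set V :=
  {u | u ∉ w.support ∧
    Bornology.IsBounded (connectedComponentIn (cycleDrawing E w)ᶜ (E.pos u))}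

/-- `in(C)`: the subgraph of `G` induced by the vertices strictly inside the cycle. -/
def innerGraph (E : PlaneEmbedding G) (w : G.Walk v0 v0) :
    SimpleGraph ↥(insideCycle E w) :=
  G.induce (insideCycle E w)

/-- `in⁺(C)`: the subgraph of `G` induced by the cycle together with the vertices
strictly inside it. -/
def closedInnerSet (E : PlaneEmbedding G) (w : G.Walk v0 v0) : Set V :=
  {u | u ∈ w.support} ∪ insideCycle E w

/-- The graph `in(C)` with all its bridges deleted; its connected components are the
bridge-blocks of `in(C)`. -/
def bridgelessInner (E : PlaneEmbedding G) (w : G.Walk v0 v0) :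
    SimpleGraph ↥(insideCycle E w) :=
  (innerGraph E w).deleteEdges {e | (innerGraph E w).IsBridge e}

/-- Block-vertices: the bridge-blocks of `in(C)`, i.e. the connected components
obtained after deleting all bridges of `in(C)`. -/
abbrev BlockVertex (E : PlaneEmbedding G) (w : G.Walk v0 v0) :=
  (bridgelessInner E w).ConnectedComponent

/-- The block-vertex (bridge-block) containing a given vertex of `in(C)`. -/
def blockOf (E : PlaneEmbedding G) (w : G.Walk v0 v0) (u : ↥(insideCycle E w)) :
    BlockVertex E w :=
  (bridgelessInner E w).connectedComponentMk u

/-- A block-vertex is an anchor if it is adjacent (in `G`) to a vertex of the cycle. -/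
def IsAnchor (E : PlaneEmbedding G) (w : G.Walk v0 v0) (b : BlockVertex E w) : Prop :=
  ∃ u : ↥(insideCycle E w), blockOf E w u = b ∧ ∃ z ∈ w.support, G.Adj ↑u z

/-- The graph on block-vertices: two blocks are adjacent iff some edge of `in(C)`
joins them. -/
def blockGraph (E : PlaneEmbedding G) (w : G.Walk v0 v0) :
    SimpleGraph (BlockVertex E w) :=
  SimpleGraph.fromRel fun b b' => ∃ u u' : ↥(insideCycle E w),
    blockOf E w u = b ∧ blockOf E w u' = b' ∧ (innerGraph E w).Adj u u'

/-- The ancillaries: block-vertices that are not anchors. -/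
def ancillarySet (E : PlaneEmbedding G) (w : G.Walk v0 v0) : Set (BlockVertex E w) :=
  {b | ¬ IsAnchor E w b}

/-- The forest formed by the ancillaries. -/
def ancForest (E : PlaneEmbedding G) (w : G.Walk v0 v0) :
    SimpleGraph ↥(ancillarySet E w) :=
  (blockGraph E w).induce (ancillarySet E w)

/-- The trees of the forest of ancillaries. -/
abbrev TreeIndex (E : PlaneEmbedding G) (w : G.Walk v0 v0) :=
  (ancForest E w).ConnectedComponent

/-- The ancillaries belonging to the tree `t` of the forest of ancillaries. -/
def ancillariesOf (E : PlaneEmbedding G) (w : G.Walk v0 v0) (t : TreeIndex E w) :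
    Set (BlockVertex E w) :=
  {b | ∃ h : b ∈ ancillarySet E w, (ancForest E w).connectedComponentMk ⟨b, h⟩ = t}

/-- The anchors of the anchored tree of `t`: the anchors adjacent to at least one
ancillary of `t`. -/
def anchorsOf (E : PlaneEmbedding G) (w : G.Walk v0 v0) (t : TreeIndex E w) :
    Set (BlockVertex E w) :=
  {x | IsAnchor E w x ∧ ∃ b ∈ ancillariesOf E w t, (blockGraph E w).Adj x b}

/-- The vertex set of the anchored tree of `t`. -/
def anchoredTreeSet (E : PlaneEmbedding G) (w : G.Walk v0 v0) (t : TreeIndex E w) :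
    Set (BlockVertex E w) :=
  ancillariesOf E w t ∪ anchorsOf E w t

/-- The anchored tree of `t`: the tree `t` together with its anchors. -/
def anchoredTree (E : PlaneEmbedding G) (w : G.Walk v0 v0) (t : TreeIndex E w) :
    SimpleGraph ↥(anchoredTreeSet E w t) :=
  (blockGraph E w).induce (anchoredTreeSet E w t)

end Blocks

/-- `v` lies on the (unique) path from `r` to `u` in the tree `T`; for trees this
expresses that `u` belongs to the subtree rooted at `v` when `T` is rooted at `r`. -/
def InSubtree {W : Type u} (T : SimpleGraph W) (r v u : W) : Prop :=
  ∀ p : T.Walk r u, p.IsPath → v ∈ p.support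

/-- `lab` is the labeling of the tree `T`, rooted at `r`, by a pre-order traversal
(with respect to some ordering of the children of each vertex): labels are distinct,
the root gets label `0`, and the labels of each subtree form a contiguous interval
starting at the label of its root. -/
def IsPreorderLabeling {W : Type u} (T : SimpleGraph W) (r : W) (lab : W → ℕ) : Prop :=
  Function.Injective lab ∧ lab r = 0 ∧
    ∀ v : W, lab '' {u | InSubtree T r v u} =
      Set.Ico (lab v) (lab v + Nat.card {u | InSubtree T r v u})

/-!
Contracting the bridge-blocks of a graph leaves a forest: every edge of the contracted graph comes
from a bridge, and a detour around it would lift to a detour around that bridge, because each block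
is connected by non-bridge edges.

In a forest, two neighbours of a vertex `x` that are joined by a walk avoiding `x` coincide. If
`x ≠ y` are both adjacent to the trees `t` and `t'`, then walking through `t` to `y` and back
through `t'` joins a neighbour of `x` in `t` to one in `t'` while avoiding `x`, so `t` and `t'`
share a vertex.
-/

section BridgeBlocks

variable {V W : Type*} {H : SimpleGraph V} {f : V → W}

theorem reachable_of_reachable_map (hf : ∀ ⦃p q⦄, f p = f q → H.Reachable p q) {u v : V}
    (h : (H.map f).Reachable (f u) (f v)) : H.Reachable u v := by
  suffices key : ∀ {a b} (_ : (H.map f).Walk a b) {u v}, f u = a → f v = b → H.Reachable u v from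
    h.elim fun p ↦ key p rfl rfl
  intro a b p
  induction p with
  | nil => exact fun hu hv ↦ hf (hu.trans hv.symm)
  | cons hadj _ ih =>
    intro u v hu hv
    obtain ⟨-, r, s, hrs, hr, hs⟩ := hadj
    exact (hf (hu.trans hr.symm)).trans (hrs.reachable.trans (ih hs hv))

theorem deleteEdges_map_le_map_deleteEdges (u v : V) :
    (H.map f).deleteEdges {s(f u, f v)} ≤ (H.deleteEdges {s(u, v)}).map f := by
  intro a b hab
  obtain ⟨⟨hne, r, s, hrs, rfl, rfl⟩, hdel⟩ := SimpleGraph.deleteEdges_adj.mp hab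
  refine ⟨hne, r, s, SimpleGraph.deleteEdges_adj.mpr ⟨hrs, fun he ↦ hdel ?_⟩, rfl, rfl⟩
  exact congrArg (Sym2.map f) he

theorem isBridge_map {u v : V} (hbr : H.IsBridge s(u, v))
    (hf : ∀ ⦃p q⦄, f p = f q → (H.deleteEdges {s(u, v)}).Reachable p q) :
    (H.map f).IsBridge s(f u, f v) := fun h ↦
  hbr (reachable_of_reachable_map hf (h.mono (deleteEdges_map_le_map_deleteEdges u v)))

theorem isAcyclic_map_bridgeBlock (H : SimpleGraph V) :
    (H.map (H.deleteEdges {e | H.IsBridge e}).connectedComponentMk).IsAcyclic := by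
  rw [SimpleGraph.isAcyclic_iff_forall_adj_isBridge]
  rintro _ _ ⟨hne, u, v, huv, rfl, rfl⟩
  have hbr : H.IsBridge s(u, v) := by
    by_contra hnbr
    have hkept : (H.deleteEdges {e | H.IsBridge e}).Adj u v :=
      SimpleGraph.deleteEdges_adj.mpr ⟨huv, hnbr⟩
    exact hne (SimpleGraph.ConnectedComponent.sound hkept.reachable)
  have hle : H.deleteEdges {e | H.IsBridge e} ≤ H.deleteEdges {s(u, v)} :=
    SimpleGraph.deleteEdges_anti (Set.singleton_subset_iff.mpr hbr)
  exact isBridge_map hbr fun p q hpq ↦ (SimpleGraph.ConnectedComponent.exact hpq).mono hle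

end BridgeBlocks

section Forest

variable {V : Type*} {F : SimpleGraph V} {s : Set V}

theorem eq_of_adj_of_adj_of_reachable_deleteIncidenceSet (hF : F.IsAcyclic) {x b c : V}
    (hb : F.Adj x b) (hc : F.Adj x c) (hbc : (F.deleteIncidenceSet x).Reachable b c) : b = c := by
  by_contra hne
  have hbridge : F.IsBridge s(x, b) := SimpleGraph.isAcyclic_iff_forall_adj_isBridge.mp hF hb
  have hxc : (F.deleteEdges {s(x, b)}).Adj x c :=
    SimpleGraph.deleteEdges_adj.mpr ⟨hc, fun h ↦ hne (Sym2.congr_right.mp h).symm⟩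
  have hle : F.deleteIncidenceSet x ≤ F.deleteEdges {s(x, b)} :=
    SimpleGraph.deleteEdges_anti
      (Set.singleton_subset_iff.mpr (F.mk'_mem_incidenceSet_left_iff.mpr hb))
  exact hbridge (hxc.reachable.trans (hbc.symm.mono hle))

/-- The outer vertex boundary of a component `t` of the subgraph induced by `s`: the vertices
outside `s` that are adjacent to a vertex of `t`. -/
def outerBoundary (F : SimpleGraph V) {s : Set V} (t : (F.induce s).ConnectedComponent) : Set V :=
  {x | x ∉ s ∧ ∃ b ∈ t.supp, F.Adj x b}

theorem reachable_deleteIncidenceSet_of_mem_supp {x : V} (hx : x ∉ s)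
    {t : (F.induce s).ConnectedComponent} {b c : s} (hb : b ∈ t.supp) (hc : c ∈ t.supp) :
    (F.deleteIncidenceSet x).Reachable b c := by
  have hbc := SimpleGraph.ConnectedComponent.exact (hb.trans hc.symm)
  rw [← F.induce_deleteIncidenceSet_of_notMem hx] at hbc
  exact hbc.map (SimpleGraph.Embedding.induce s).toHom

theorem exists_reachable_deleteIncidenceSet_of_mem_outerBoundary
    {t : (F.induce s).ConnectedComponent} {x y : V} (hx : x ∈ outerBoundary F t)
    (hy : y ∈ outerBoundary F t) (hxy : x ≠ y) :
    ∃ b ∈ t.supp, F.Adj x b ∧ (F.deleteIncidenceSet x).Reachable b y := by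
  obtain ⟨hxs, b, hb, hxb⟩ := hx
  obtain ⟨-, c, hc, hyc⟩ := hy
  have hcy : (F.deleteIncidenceSet x).Adj c y :=
    SimpleGraph.deleteIncidenceSet_adj.mpr ⟨hyc.symm, ne_of_mem_of_not_mem c.2 hxs, hxy.symm⟩
  exact ⟨b, hb, hxb, (reachable_deleteIncidenceSet_of_mem_supp hxs hb hc).trans hcy.reachable⟩

theorem subsingleton_outerBoundary_inter (hF : F.IsAcyclic)
    {t t' : (F.induce s).ConnectedComponent} (hne : t ≠ t') :
    (outerBoundary F t ∩ outerBoundary F t').Subsingleton := by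
  rintro x ⟨hx, hx'⟩ y ⟨hy, hy'⟩
  by_contra hxy
  obtain ⟨b, hb, hxb, hby⟩ := exists_reachable_deleteIncidenceSet_of_mem_outerBoundary hx hy hxy
  obtain ⟨b', hb', hxb', hby'⟩ :=
    exists_reachable_deleteIncidenceSet_of_mem_outerBoundary hx' hy' hxy
  have hbb' : b = b' := Subtype.ext <|
    eq_of_adj_of_adj_of_reachable_deleteIncidenceSet hF hxb hxb' (hby.trans hby'.symm)
  subst hbb'
  exact hne (hb.symm.trans hb')

end Forest

section AnchoredTrees

variable {V : Type u} {G : SimpleGraph V} {v0 : V} (E : PlaneEmbedding G) (w : G.Walk v0 v0)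

theorem blockGraph_eq_map_blockOf : blockGraph E w = (innerGraph E w).map (blockOf E w) := by
  ext b b'
  rw [blockGraph, SimpleGraph.fromRel_adj, SimpleGraph.map_adj']
  refine and_congr_right fun _ ↦ ⟨?_, ?_⟩
  · rintro (⟨u, u', hu, hu', hadj⟩ | ⟨u, u', hu, hu', hadj⟩)
    · exact ⟨u, u', hadj, hu, hu'⟩
    · exact ⟨u', u, hadj.symm, hu', hu⟩
  · rintro ⟨u, u', hadj, hu, hu'⟩
    exact Or.inl ⟨u, u', hu, hu', hadj⟩

theorem isAcyclic_blockGraph : (blockGraph E w).IsAcyclic :=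
  blockGraph_eq_map_blockOf E w ▸ isAcyclic_map_bridgeBlock (innerGraph E w)

theorem anchorsOf_eq_outerBoundary (t : TreeIndex E w) :
    anchorsOf E w t = outerBoundary (blockGraph E w) t := by
  ext x
  refine and_congr not_not.symm ⟨?_, ?_⟩
  · rintro ⟨b, ⟨hb, hbt⟩, hadj⟩
    exact ⟨⟨b, hb⟩, hbt, hadj⟩
  · rintro ⟨⟨b, hb⟩, hbt, hadj⟩
    exact ⟨b, ⟨hb, hbt⟩, hadj⟩

theorem anchored_trees_share_at_most_one_anchor_general {t t' : TreeIndex E w} (hne : t ≠ t') :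
    (anchorsOf E w t ∩ anchorsOf E w t').Subsingleton := by
  rw [anchorsOf_eq_outerBoundary, anchorsOf_eq_outerBoundary]
  exact subsingleton_outerBoundary_inter (isAcyclic_blockGraph E w) hne

end AnchoredTrees

/-- Two distinct anchored trees share at most one common anchor. -/
theorem anchored_trees_share_at_most_one_anchor {V : Type u} {G : SimpleGraph V}
    (hbic : G.IsBiconnected) (hdeg : G.MaxDegreeLE 4) (E : PlaneEmbedding G)
    {v0 : V} (w : G.Walk v0 v0) (hw : w.IsCycle) (t t' : TreeIndex E w)
    (hne : t ≠ t') :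
    (anchorsOf E w t ∩ anchorsOf E w t').Subsingleton :=
  anchored_trees_share_at_most_one_anchor_general E w hne
end

section
/- Every anchored tree T-bar contains at least two anchors. -/
open Set

universe u

/-! Let `U` be the set of vertices lying in the ancillaries of a tree `t`. No vertex of `U` is
adjacent to the cycle `C`, and by planarity an edge cannot jump over `C`, so every edge of `G`
leaving `U` ends in an anchor of `t`. Distinct edges leaving `U` end in distinct anchors: an edge
`ua` leaving `U` joins two blocks, so it is a bridge of `in(C)`; if a second edge `xb` leaving `U`
ended in the same block, then the detour `u ⋯ x b ⋯ a`, through `U` and then through the block of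
`a`, would avoid `ua`. Hence `t` has at least as many anchors as there are edges leaving `U`, which
are at least `k` in a `k`-edge-connected graph. A biconnected graph is 2-edge-connected: the ends of
an edge `uv` can be joined without it through any third vertex `x`, from `u` to `x` avoiding `v` and
from `x` to `v` avoiding `u`. -/

section EdgeCuts

variable {W : Type*} {H : SimpleGraph W}

theorem reachable_deleteEdges_singleton_of_reachable_induce {S : Set W} {e : Sym2 W} {c : W}
    (hce : c ∈ e) (hcS : c ∉ S) {x y : S} (hxy : (H.induce S).Reachable x y) :
    (H.deleteEdges {e}).Reachable (x : W) y := by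
  refine hxy.map ⟨Subtype.val, fun {p q} hpq => SimpleGraph.deleteEdges_adj.2 ⟨hpq, ?_⟩⟩
  rintro rfl
  rcases Sym2.mem_iff.1 hce with rfl | rfl
  exacts [hcS p.2, hcS q.2]

theorem isEdgeConnected_two_of_isBiconnected (hH : H.IsBiconnected) : H.IsEdgeConnected 2 := by
  obtain ⟨hcard, hconn, hdel⟩ := hH
  refine SimpleGraph.isEdgeConnected_two.2 fun e => ?_
  induction e using Sym2.ind with | _ u v => ?_
  refine (hconn.connected_delete_edge_of_not_isBridge fun hbridge => hbridge ?_).preconnected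
  obtain rfl | huv := eq_or_ne u v
  · rfl
  obtain ⟨x, -, hx⟩ : ∃ x ∈ Set.univ, x ∉ ({u, v} : Set W) :=
    Set.exists_mem_notMem_of_ncard_lt_ncard (by rwa [Set.ncard_pair huv, Set.ncard_univ])
  obtain ⟨hxu, hxv⟩ : x ≠ u ∧ x ≠ v := by simpa using hx
  have hux : (H.deleteEdges {s(u, v)}).Reachable u x :=
    reachable_deleteEdges_singleton_of_reachable_induce (Sym2.mem_mk_right u v) (by simp)
      ((hdel v).preconnected ⟨u, huv⟩ ⟨x, hxv⟩)
  have hxv : (H.deleteEdges {s(u, v)}).Reachable x v :=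
    reachable_deleteEdges_singleton_of_reachable_induce (Sym2.mem_mk_left u v) (by simp)
      ((hdel u).preconnected ⟨x, hxu⟩ ⟨v, huv.symm⟩)
  exact hux.trans hxv

/-- The edge boundary (cut) of a vertex set `S`: the edges with exactly one endpoint in `S`. -/
def edgeBoundary (H : SimpleGraph W) (S : Set W) : Set (Sym2 W) :=
  {e | ∃ x ∈ S, ∃ y ∉ S, H.Adj x y ∧ s(x, y) = e}

theorem le_encard_edgeBoundary {k : ℕ} (hH : H.IsEdgeConnected k) {S : Set W} {u v : W}
    (hu : u ∈ S) (hv : v ∉ S) : k ≤ (edgeBoundary H S).encard := by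
  by_contra! hlt
  obtain ⟨p⟩ := hH u v hlt
  obtain ⟨d, -, hfst, hsnd⟩ := p.exists_boundary_dart S hu hv
  obtain ⟨hadj, hnot⟩ := SimpleGraph.deleteEdges_adj.1 d.adj
  exact hnot ⟨d.fst, hfst, d.snd, hsnd, hadj, rfl⟩

end EdgeCuts

section BridgeBlocks

variable {W : Type*} {H K : SimpleGraph W}

theorem reachable_induce_of_connectedComponentMk_eq (hKH : K ≤ H) {B : Set K.ConnectedComponent}
    {x y : K.connectedComponentMk ⁻¹' B}
    (hxy : K.connectedComponentMk x = K.connectedComponentMk y) :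
    (H.induce (K.connectedComponentMk ⁻¹' B)).Reachable x y := by
  have hmaps : Set.MapsTo (SimpleGraph.Hom.ofLE hKH) (K.connectedComponentMk (y : W)).supp
      (K.connectedComponentMk ⁻¹' B) := fun z hz => Set.mem_preimage.2 (hz ▸ y.2)
  exact ((K.connectedComponentMk (y : W)).reachable_toSimpleGraph hxy rfl).map
    (SimpleGraph.induceHom _ hmaps)

theorem preconnected_induce_preimage_connectedComponentMk (hKH : K ≤ H)
    {Q : SimpleGraph K.ConnectedComponent}
    (hQ : ∀ ⦃b c⦄, Q.Adj b c →
      ∃ u v, K.connectedComponentMk u = b ∧ K.connectedComponentMk v = c ∧ H.Adj u v)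
    {B : Set K.ConnectedComponent} (hB : (Q.induce B).Preconnected) :
    (H.induce (K.connectedComponentMk ⁻¹' B)).Preconnected := by
  suffices key : ∀ {b c : B}, (Q.induce B).Walk b c → ∀ x y : K.connectedComponentMk ⁻¹' B,
      K.connectedComponentMk x = b → K.connectedComponentMk y = c →
      (H.induce (K.connectedComponentMk ⁻¹' B)).Reachable x y from
    fun x y => key (hB ⟨_, x.2⟩ ⟨_, y.2⟩).some x y rfl rfl
  intro b c p
  induction p with
  | nil => exact fun x y hx hy => reachable_induce_of_connectedComponentMk_eq hKH (hx.trans hy.symm)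
  | @cons b b' c hadj _ ih =>
    intro x y hx hy
    obtain ⟨u, v, hu, hv, huv⟩ := hQ hadj
    let u' : K.connectedComponentMk ⁻¹' B := ⟨u, Set.mem_preimage.2 (hu ▸ b.2)⟩
    let v' : K.connectedComponentMk ⁻¹' B := ⟨v, Set.mem_preimage.2 (hv ▸ b'.2)⟩
    have hxu : (H.induce _).Reachable x u' :=
      reachable_induce_of_connectedComponentMk_eq hKH (hx.trans hu.symm)
    have huv' : (H.induce _).Adj u' v' := huv
    exact hxu.trans (huv'.reachable.trans (ih v' y hv hy))

theorem isBridge_of_not_reachable_deleteEdges_isBridge {u a : W} (hua : H.Adj u a)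
    (hnot : ¬(H.deleteEdges {e | H.IsBridge e}).Reachable u a) : H.IsBridge s(u, a) := by
  by_contra hbridge
  have hadj : (H.deleteEdges {e | H.IsBridge e}).Adj u a :=
    SimpleGraph.deleteEdges_adj.2 ⟨hua, hbridge⟩
  exact hnot hadj.reachable

theorem boundary_edge_eq_of_reachable {S : Set W} (hS : (H.induce S).Preconnected) {u a u' a' : W}
    (hu : u ∈ S) (ha : a ∉ S) (hbridge : H.IsBridge s(u, a)) (hu' : u' ∈ S) (hadj' : H.Adj u' a')
    (haa' : (H.deleteEdges {e | H.IsBridge e}).Reachable a a') : s(u, a) = s(u', a') := by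
  by_contra hne
  have huu' : (H.deleteEdges {s(u, a)}).Reachable u u' :=
    reachable_deleteEdges_singleton_of_reachable_induce (Sym2.mem_mk_right u a) ha
      (hS ⟨u, hu⟩ ⟨u', hu'⟩)
  have hua' : (H.deleteEdges {s(u, a)}).Adj u' a' :=
    SimpleGraph.deleteEdges_adj.2 ⟨hadj', fun h => hne h.symm⟩
  have ha'a : (H.deleteEdges {s(u, a)}).Reachable a' a :=
    (haa'.mono (SimpleGraph.deleteEdges_anti fun _ he => he ▸ hbridge)).symm
  exact hbridge (huu'.trans (hua'.reachable.trans ha'a))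

end BridgeBlocks

section AnchoredTrees

variable {V : Type u} {G : SimpleGraph V} {v0 : V} {E : PlaneEmbedding G} {w : G.Walk v0 v0}

theorem arc_subset_compl_cycleDrawing {u v : V} (h : G.Adj u v) (hu : u ∉ w.support)
    (hv : v ∉ w.support) : E.arc h ⊆ (cycleDrawing E w)ᶜ := by
  rintro p hp ⟨a, b, hab, he, hpa⟩
  have ha : a ∈ w.support := w.fst_mem_support_of_mem_edges he
  have hb : b ∈ w.support := w.snd_mem_support_of_mem_edges he
  have hne : s(u, v) ≠ s(a, b) := by
    rw [Ne, Sym2.eq_iff]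
    rintro (⟨rfl, rfl⟩ | ⟨rfl, rfl⟩) <;> contradiction
  obtain ⟨hpuv, hpab⟩ := E.arc_inter h hab hne ⟨hp, hpa⟩
  rcases hpuv with rfl | rfl <;> rcases hpab with hpos | hpos <;>
    cases E.pos_inj hpos <;> contradiction

theorem PlaneEmbedding.isPreconnected_arc (E : PlaneEmbedding G) {u v : V} (h : G.Adj u v) :
    IsPreconnected (E.arc h) := by
  obtain ⟨f, hf, -, -, -, himage⟩ := E.arc_curve h
  exact himage ▸ isPreconnected_Icc.image f hf

theorem PlaneEmbedding.pos_left_mem_arc (E : PlaneEmbedding G) {u v : V} (h : G.Adj u v) :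
    E.pos u ∈ E.arc h := by
  obtain ⟨f, -, -, hf0, -, himage⟩ := E.arc_curve h
  exact himage ▸ hf0 ▸ Set.mem_image_of_mem f (Set.left_mem_Icc.2 zero_le_one)

theorem mem_insideCycle_of_adj {u v : V} (h : G.Adj u v) (hu : u ∈ insideCycle E w)
    (hv : v ∉ w.support) : v ∈ insideCycle E w := by
  have hpv : E.pos v ∈ E.arc h := E.arc_symm h ▸ E.pos_left_mem_arc h.symm
  have hcomp : E.pos v ∈ connectedComponentIn (cycleDrawing E w)ᶜ (E.pos u) :=
    (E.isPreconnected_arc h).subset_connectedComponentIn (E.pos_left_mem_arc h)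
      (arc_subset_compl_cycleDrawing h hu.1 hv) hpv
  exact ⟨hv, connectedComponentIn_eq hcomp ▸ hu.2⟩

theorem exists_innerGraph_adj_of_blockGraph_adj {b c : BlockVertex E w}
    (h : (blockGraph E w).Adj b c) :
    ∃ u v, blockOf E w u = b ∧ blockOf E w v = c ∧ (innerGraph E w).Adj u v := by
  obtain ⟨-, ⟨u, v, hu, hv, huv⟩ | ⟨v, u, hv, hu, hvu⟩⟩ := h
  exacts [⟨u, v, hu, hv, huv⟩, ⟨u, v, hu, hv, hvu.symm⟩]

variable {t : TreeIndex E w}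

theorem preconnected_induce_ancillariesOf :
    ((blockGraph E w).induce (ancillariesOf E w t)).Preconnected := by
  let f : t.toSimpleGraph →g (blockGraph E w).induce (ancillariesOf E w t) :=
    ⟨fun b => ⟨b.1.1, b.1.2, b.2⟩, fun hbc => hbc⟩
  exact t.connected_toSimpleGraph.preconnected.map f fun ⟨b, hb, hbt⟩ => ⟨⟨⟨b, hb⟩, hbt⟩, rfl⟩

variable (E w t) in
/-- The vertices of `in(C)` lying in the ancillaries of the tree `t`. -/
def treeVertices : Set ↥(insideCycle E w) :=
  blockOf E w ⁻¹' ancillariesOf E w t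

theorem treeVertices_nonempty : (treeVertices E w t).Nonempty := by
  obtain ⟨⟨b, hb⟩, hbt⟩ := t.exists_rep
  obtain ⟨u, rfl⟩ := b.exists_rep
  exact ⟨u, hb, hbt⟩

theorem preconnected_induce_treeVertices :
    ((innerGraph E w).induce (treeVertices E w t)).Preconnected :=
  preconnected_induce_preimage_connectedComponentMk (SimpleGraph.deleteEdges_le _)
    (fun _ _ => exists_innerGraph_adj_of_blockGraph_adj) preconnected_induce_ancillariesOf

theorem notMem_treeVertices_of_mem_anchorsOf {a : ↥(insideCycle E w)}
    (ha : blockOf E w a ∈ anchorsOf E w t) : a ∉ treeVertices E w t :=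
  fun hat => hat.1 ha.1

theorem blockOf_mem_anchorsOf_of_adj {u a : ↥(insideCycle E w)} (hu : u ∈ treeVertices E w t)
    (ha : a ∉ treeVertices E w t) (hua : (innerGraph E w).Adj u a) :
    blockOf E w a ∈ anchorsOf E w t := by
  have hne : blockOf E w a ≠ blockOf E w u := fun h => ha (Set.mem_preimage.2 (h ▸ hu))
  have hadj : (blockGraph E w).Adj (blockOf E w a) (blockOf E w u) :=
    ⟨hne, Or.inl ⟨a, u, rfl, rfl, hua.symm⟩⟩
  refine ⟨by_contra fun hanc => ha ⟨hanc, ?_⟩, _, hu, hadj⟩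
  obtain ⟨hu_anc, hut⟩ := hu
  have hadj' : (ancForest E w).Adj ⟨_, hanc⟩ ⟨_, hu_anc⟩ := hadj
  exact (SimpleGraph.ConnectedComponent.sound hadj'.reachable).trans hut

theorem exists_anchor_of_mem_edgeBoundary {e : Sym2 V}
    (he : e ∈ edgeBoundary G (Subtype.val '' treeVertices E w t)) :
    ∃ u a : ↥(insideCycle E w), u ∈ treeVertices E w t ∧ blockOf E w a ∈ anchorsOf E w t ∧
      (innerGraph E w).Adj u a ∧ s(u, a).map Subtype.val = e := by
  obtain ⟨_, ⟨u, hu, rfl⟩, v, hv, huv, rfl⟩ := he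
  have hv_cycle : v ∉ w.support := fun hvw => hu.1 ⟨u, rfl, v, hvw, huv⟩
  let a : ↥(insideCycle E w) := ⟨v, mem_insideCycle_of_adj huv u.2 hv_cycle⟩
  have ha : a ∉ treeVertices E w t := fun ha => hv ⟨a, ha, rfl⟩
  exact ⟨u, a, hu, blockOf_mem_anchorsOf_of_adj hu ha huv, huv, rfl⟩

theorem edge_eq_of_blockOf_eq {u a u' a' : ↥(insideCycle E w)} (hu : u ∈ treeVertices E w t)
    (ha : a ∉ treeVertices E w t) (hua : (innerGraph E w).Adj u a) (hu' : u' ∈ treeVertices E w t)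
    (hua' : (innerGraph E w).Adj u' a') (haa' : blockOf E w a = blockOf E w a') :
    s(u, a) = s(u', a') := by
  have hne : blockOf E w u ≠ blockOf E w a := fun h => ha (Set.mem_preimage.2 (h ▸ hu))
  have hbridge : (innerGraph E w).IsBridge s(u, a) :=
    isBridge_of_not_reachable_deleteEdges_isBridge hua
      fun h => hne (SimpleGraph.ConnectedComponent.sound h)
  exact boundary_edge_eq_of_reachable preconnected_induce_treeVertices hu ha hbridge hu' hua'
    (SimpleGraph.ConnectedComponent.exact haa')

theorem encard_edgeBoundary_le_encard_anchorsOf :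
    (edgeBoundary G (Subtype.val '' treeVertices E w t)).encard ≤ (anchorsOf E w t).encard := by
  have : Nonempty ↥(insideCycle E w) := (treeVertices_nonempty (t := t)).to_type
  choose! u a hu ha hua he using fun e => exists_anchor_of_mem_edgeBoundary (t := t) (e := e)
  refine Set.encard_le_encard_of_injOn (f := fun e => blockOf E w (a e)) ha ?_
  intro e₁ he₁ e₂ he₂ hblock
  rw [← he e₁ he₁, ← he e₂ he₂, edge_eq_of_blockOf_eq (hu e₁ he₁)
    (notMem_treeVertices_of_mem_anchorsOf (ha e₁ he₁)) (hua e₁ he₁) (hu e₂ he₂) (hua e₂ he₂) hblock]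

end AnchoredTrees

theorem anchored_tree_has_two_anchors_general {V : Type u} {G : SimpleGraph V} {k : ℕ}
    (hG : G.IsEdgeConnected k) (E : PlaneEmbedding G) {v0 : V} (w : G.Walk v0 v0)
    (t : TreeIndex E w) : k ≤ (anchorsOf E w t).encard := by
  obtain ⟨u, hu⟩ := treeVertices_nonempty (t := t)
  have hv0 : v0 ∉ Subtype.val '' treeVertices E w t := by
    rintro ⟨v, -, hv⟩
    exact v.2.1 (by simp only [hv, w.start_mem_support])
  exact (le_encard_edgeBoundary hG (Set.mem_image_of_mem _ hu) hv0).trans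
    encard_edgeBoundary_le_encard_anchorsOf

/-- Every anchored tree contains at least two anchors. -/
theorem anchored_tree_has_two_anchors {V : Type u} {G : SimpleGraph V}
    (hbic : G.IsBiconnected) (hdeg : G.MaxDegreeLE 4) (E : PlaneEmbedding G)
    {v0 : V} (w : G.Walk v0 v0) (hw : w.IsCycle) (t : TreeIndex E w) :
    ∃ x y : BlockVertex E w, x ∈ anchorsOf E w t ∧ y ∈ anchorsOf E w t ∧ x ≠ y :=
  Set.one_lt_encard_iff.1 <| Nat.one_lt_ofNat.trans_le <|
    anchored_tree_has_two_anchors_general (isEdgeConnected_two_of_isBiconnected hbic) E w t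
end

section
/- For each ancillary c of a labeled anchored tree T-bar there is at least one anchor of T-bar whose label is smaller than the label of c and at least one anchor of T-bar whose label is greater than the label of c. -/
open Set

universe u

/-
An anchored tree arises from `in(C)` by contracting bridge-blocks, so every edge joining two blocks
is a bridge of `in(C)`. Hence only one edge of `in(C)` leads from an ancillary `c` towards the root.
If the subtree of `c` had no anchor, then no vertex of its blocks would be adjacent to `C`, and that
single edge would be the only connection of these blocks to the rest of `G`; its endpoint outside
them would be a cut vertex. So the subtree of `c` contains an anchor, and in pre-order it is labeled
after `c`, while the root is an anchor labeled before `c`.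
-/

section Graph

variable {α : Type*} {H K : SimpleGraph α}

theorem exists_adj_boundary_ne {u x y : α} (hu : (H.induce {v | v ≠ u}).Preconnected) {S : Set α}
    (hx : x ∈ S) (hy : y ∉ S) (hxu : x ≠ u) (hyu : y ≠ u) :
    ∃ a ∈ S, ∃ b ∉ S, H.Adj a b ∧ b ≠ u := by
  obtain ⟨p⟩ := hu ⟨x, hxu⟩ ⟨y, hyu⟩
  obtain ⟨d, -, hfst, hsnd⟩ := p.exists_boundary_dart (Subtype.val ⁻¹' S) hx hy
  exact ⟨d.fst, hfst, d.snd, hsnd, d.adj, d.snd.2⟩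

theorem exists_walk_in_component (hKH : K ≤ H) {x y : α}
    (hxy : K.connectedComponentMk x = K.connectedComponentMk y) :
    ∃ q : H.Walk x y,
      ∀ v ∈ q.support, K.connectedComponentMk v = K.connectedComponentMk x := by
  classical
  obtain ⟨q⟩ := SimpleGraph.ConnectedComponent.exact hxy
  refine ⟨q.mapLe hKH, fun v hv => ?_⟩
  rw [SimpleGraph.Walk.support_mapLe_eq_support] at hv
  exact SimpleGraph.ConnectedComponent.sound (q.takeUntil v hv).reachable.symm

/-- `Q` plays the role of the contraction of the components of `K` in `H`. -/
theorem exists_walk_lift (hKH : K ≤ H) {Q : SimpleGraph K.ConnectedComponent}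
    (hQ : ∀ ⦃B B'⦄, Q.Adj B B' →
      ∃ u u', K.connectedComponentMk u = B ∧ K.connectedComponentMk u' = B' ∧ H.Adj u u')
    {B B' : K.ConnectedComponent} (p : Q.Walk B B') {x y : α}
    (hx : K.connectedComponentMk x = B) (hy : K.connectedComponentMk y = B') :
    ∃ q : H.Walk x y, ∀ v ∈ q.support, K.connectedComponentMk v ∈ p.support := by
  induction p generalizing x with
  | nil =>
    obtain ⟨q, hq⟩ := exists_walk_in_component hKH (hx.trans hy.symm)
    exact ⟨q, fun v hv => by simp [hq v hv, hx]⟩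
  | cons hadj p ih =>
    obtain ⟨u, u', hu, hu', huu'⟩ := hQ hadj
    obtain ⟨q, hq⟩ := exists_walk_in_component hKH (hx.trans hu.symm)
    obtain ⟨q', hq'⟩ := ih hu' hy
    refine ⟨q.append (.cons huu' q'), fun v hv => ?_⟩
    rw [SimpleGraph.Walk.mem_support_append_iff, SimpleGraph.Walk.support_cons,
      List.mem_cons] at hv
    rw [SimpleGraph.Walk.support_cons, List.mem_cons]
    rcases hv with hv | rfl | hv
    · exact .inl ((hq v hv).trans hx)
    · exact .inl hu
    · exact .inr (hq' v hv)

/-- `H` without its bridges: its connected components are the bridge-blocks of `H`. The graph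
`bridgelessInner E w` is the case `H = innerGraph E w`. -/
def bridgeless (H : SimpleGraph α) : SimpleGraph α :=
  H.deleteEdges {e | H.IsBridge e}

theorem bridgeless_le : bridgeless H ≤ H :=
  H.deleteEdges_le _

theorem reachable_deleteEdges_of_isBridge {e : Sym2 α} (he : H.IsBridge e) {x y : α}
    (hxy : (bridgeless H).connectedComponentMk x = (bridgeless H).connectedComponentMk y) :
    (H.deleteEdges {e}).Reachable x y :=
  have hle : bridgeless H ≤ H.deleteEdges {e} :=
    SimpleGraph.deleteEdges_anti (Set.singleton_subset_iff.2 he)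
  (SimpleGraph.ConnectedComponent.exact hxy).mono hle

theorem isBridge_of_adj_of_component_ne {a b : α} (hab : H.Adj a b)
    (hne : (bridgeless H).connectedComponentMk b ≠ (bridgeless H).connectedComponentMk a) :
    H.IsBridge s(a, b) := by
  by_contra hbridge
  have hadj : (bridgeless H).Adj a b := SimpleGraph.deleteEdges_adj.2 ⟨hab, hbridge⟩
  exact hne (SimpleGraph.ConnectedComponent.sound hadj.symm.reachable)

theorem eq_of_adj_bridgeBlock_of_walk {a a' b b' : α} (hab : H.Adj a b) (hab' : H.Adj a' b')
    (haa' : (bridgeless H).connectedComponentMk a = (bridgeless H).connectedComponentMk a')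
    (p : H.Walk b b')
    (hp : ∀ v ∈ p.support,
      (bridgeless H).connectedComponentMk v ≠ (bridgeless H).connectedComponentMk a) :
    b = b' := by
  by_contra hne
  have hbridge : H.IsBridge s(a, b) :=
    isBridge_of_adj_of_component_ne hab (hp b p.start_mem_support)
  have hp_edge : s(a, b) ∉ p.edges := fun h => hp a (p.fst_mem_support_of_mem_edges h) rfl
  have hab'_ne : s(a', b') ≠ s(a, b) := by
    rintro h
    rcases Sym2.eq_iff.1 h with ⟨-, h⟩ | ⟨-, rfl⟩
    · exact hne h.symm
    · exact hp b' p.end_mem_support rfl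
  have hadj' : (H.deleteEdges {s(a, b)}).Adj a' b' :=
    SimpleGraph.deleteEdges_adj.2 ⟨hab', hab'_ne⟩
  exact hbridge (((reachable_deleteEdges_of_isBridge hbridge haa').trans hadj'.reachable).trans
    (p.toDeleteEdge _ hp_edge).reachable.symm)

end Graph

section Subtree

variable {W : Type*} {T : SimpleGraph W} {r v u : W}

theorem not_inSubtree_iff : ¬ InSubtree T r v u ↔ ∃ p : T.Walk r u, v ∉ p.support := by
  classical
  simp only [InSubtree, not_forall]
  constructor
  · rintro ⟨p, -, hp⟩
    exact ⟨p, hp⟩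
  · rintro ⟨p, hp⟩
    exact ⟨p.bypass, p.bypass_isPath, fun h => hp (p.support_bypass_subset_support h)⟩

theorem inSubtree_root : InSubtree T r r u :=
  fun p _ => p.start_mem_support

theorem inSubtree_self : InSubtree T r v v :=
  fun p _ => p.end_mem_support

theorem InSubtree.eq_root (h : InSubtree T r v r) : v = r := by
  simpa using h .nil .nil

theorem InSubtree.eq_of_adj {u' : W} (hu : InSubtree T r v u) (hu' : ¬ InSubtree T r v u')
    (hadj : T.Adj u' u) : v = u := by
  obtain ⟨p, hp⟩ := not_inSubtree_iff.1 hu'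
  by_contra hne
  refine not_inSubtree_iff.2 ⟨p.concat hadj, ?_⟩ hu
  simp [SimpleGraph.Walk.support_concat, hp, hne]

theorem exists_walk_of_not_inSubtree {u' : W} (hu : ¬ InSubtree T r v u)
    (hu' : ¬ InSubtree T r v u') : ∃ p : T.Walk u u', v ∉ p.support := by
  obtain ⟨p, hp⟩ := not_inSubtree_iff.1 hu
  obtain ⟨p', hp'⟩ := not_inSubtree_iff.1 hu'
  refine ⟨p.reverse.append p', ?_⟩
  simp [SimpleGraph.Walk.mem_support_append_iff, hp, hp']

theorem IsPreorderLabeling.lt_of_inSubtree {lab : W → ℕ} (hlab : IsPreorderLabeling T r lab)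
    (hu : InSubtree T r v u) (hne : v ≠ u) : lab v < lab u := by
  obtain ⟨hinj, -, hinterval⟩ := hlab
  have hmem : lab u ∈ lab '' {u | InSubtree T r v u} := ⟨u, hu, rfl⟩
  rw [hinterval v] at hmem
  exact hmem.1.lt_of_ne (hinj.ne hne)

end Subtree

section Drawing

variable {V : Type u} {G : SimpleGraph V} (E : PlaneEmbedding G)

theorem PlaneEmbedding.isPreconnected_arc_s9 {a b : V} (hab : G.Adj a b) :
    IsPreconnected (E.arc hab) := by
  obtain ⟨f, hf, -, -, -, himage⟩ := E.arc_curve hab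
  rw [← himage]
  exact isPreconnected_Icc.image f hf

theorem PlaneEmbedding.pos_mem_arc {a b : V} (hab : G.Adj a b) : E.pos a ∈ E.arc hab := by
  obtain ⟨f, -, -, hf0, -, himage⟩ := E.arc_curve hab
  rw [← himage, ← hf0]
  exact Set.mem_image_of_mem f (by simp)

theorem arc_subset_compl_cycleDrawing_s9 {v0 : V} (w : G.Walk v0 v0) {a b : V} (hab : G.Adj a b)
    (ha : a ∉ w.support) (hb : b ∉ w.support) : E.arc hab ⊆ (cycleDrawing E w)ᶜ := by
  rintro p hp ⟨u, v, huv, hedge, hpuv⟩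
  have hu := w.fst_mem_support_of_mem_edges hedge
  have hv := w.snd_mem_support_of_mem_edges hedge
  have hne : s(a, b) ≠ s(u, v) := by
    intro h
    rcases Sym2.eq_iff.1 h with ⟨rfl, -⟩ | ⟨rfl, -⟩ <;> contradiction
  obtain ⟨hp_ab, hp_uv⟩ := E.arc_inter hab huv hne ⟨hp, hpuv⟩
  rcases hp_ab with h | h <;> rcases hp_uv with h' | h' <;>
    · have := E.pos_inj (h.symm.trans h')
      subst this
      contradiction

theorem mem_insideCycle_of_adj_s9 {v0 : V} {w : G.Walk v0 v0} {a b : V} (ha : a ∈ insideCycle E w)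
    (hab : G.Adj a b) (hb : b ∉ w.support) : b ∈ insideCycle E w := by
  refine ⟨hb, ?_⟩
  have hmem := (E.isPreconnected_arc_s9 hab).subset_connectedComponentIn (E.pos_mem_arc hab)
    (arc_subset_compl_cycleDrawing_s9 E w hab ha.1 hb) (E.arc_symm hab ▸ E.pos_mem_arc hab.symm)
  rw [← connectedComponentIn_eq hmem]
  exact ha.2

end Drawing

section AnchoredTree

variable {V : Type u} {G : SimpleGraph V} {E : PlaneEmbedding G} {v0 : V} {w : G.Walk v0 v0}

theorem blockGraph_adj_iff {B B' : BlockVertex E w} :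
    (blockGraph E w).Adj B B' ↔ B ≠ B' ∧ ∃ u u' : ↥(insideCycle E w),
      blockOf E w u = B ∧ blockOf E w u' = B' ∧ (innerGraph E w).Adj u u' := by
  rw [blockGraph, SimpleGraph.fromRel_adj]
  refine and_congr_right fun _ => ⟨?_, .inl⟩
  rintro (h | ⟨u, u', hu, hu', hadj⟩)
  · exact h
  · exact ⟨u', u, hu', hu, hadj.symm⟩

theorem eq_of_adj_block_of_blockGraph_walk {A B B' : BlockVertex E w}
    {a a' b b' : ↥(insideCycle E w)} (ha : blockOf E w a = A) (ha' : blockOf E w a' = A)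
    (hb : blockOf E w b = B) (hb' : blockOf E w b' = B')
    (hab : (innerGraph E w).Adj a b) (hab' : (innerGraph E w).Adj a' b')
    (p : (blockGraph E w).Walk B B') (hp : A ∉ p.support) : b = b' := by
  obtain ⟨q, hq⟩ := exists_walk_lift bridgeless_le
    (fun _ _ hadj => (blockGraph_adj_iff.1 hadj).2) p hb hb'
  refine eq_of_adj_bridgeBlock_of_walk hab hab' (ha.trans ha'.symm) q fun v hv hva => ?_
  have hvA : blockOf E w v = A := hva.trans ha
  exact hp (hvA ▸ hq v hv)

variable {t : TreeIndex E w} {r c : ↥(anchoredTreeSet E w t)}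

theorem notMem_anchorsOf_of_mem_ancillariesOf {B : BlockVertex E w}
    (hB : B ∈ ancillariesOf E w t) : B ∉ anchorsOf E w t :=
  fun h => hB.1 h.1

theorem mem_anchoredTreeSet_of_adj {B B' : BlockVertex E w} (hB : B ∈ ancillariesOf E w t)
    (hadj : (blockGraph E w).Adj B B') : B' ∈ anchoredTreeSet E w t := by
  by_cases hB' : IsAnchor E w B'
  · exact .inr ⟨hB', B, hB, hadj.symm⟩
  · obtain ⟨hB, rfl⟩ := hB
    have hadj' : (ancForest E w).Adj ⟨B', hB'⟩ ⟨B, hB⟩ := hadj.symm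
    exact .inl ⟨hB', SimpleGraph.ConnectedComponent.sound hadj'.reachable⟩

theorem mem_insideCycle_of_adj_ancillary {a b : V} (ha : a ∈ insideCycle E w)
    (hanc : blockOf E w ⟨a, ha⟩ ∈ ancillariesOf E w t) (hab : G.Adj a b) :
    b ∈ insideCycle E w :=
  mem_insideCycle_of_adj_s9 E ha hab fun hb => hanc.1 ⟨⟨a, ha⟩, rfl, b, hb, hab⟩

theorem exists_blockGraph_walk_of_not_inSubtree {B B' : ↥(anchoredTreeSet E w t)}
    (hB : ¬ InSubtree (anchoredTree E w t) r c B)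
    (hB' : ¬ InSubtree (anchoredTree E w t) r c B') :
    ∃ p : (blockGraph E w).Walk B B', ↑c ∉ p.support := by
  obtain ⟨p, hp⟩ := exists_walk_of_not_inSubtree hB hB'
  refine ⟨p.map (SimpleGraph.Embedding.induce _).toHom, fun hc => ?_⟩
  obtain ⟨A, hA, hAc⟩ := List.mem_map.1 (SimpleGraph.Walk.support_map _ p ▸ hc)
  exact hp (Subtype.ext hAc ▸ hA)

/-- The vertices of `G` that lie in the blocks of the subtree of `c`, the anchored tree of `t`
being rooted at `r`. -/
def subtreeRegion (r c : ↥(anchoredTreeSet E w t)) : Set V :=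
  {v | ∃ h : v ∈ insideCycle E w, ∃ B : ↥(anchoredTreeSet E w t),
    InSubtree (anchoredTree E w t) r c B ∧ blockOf E w ⟨v, h⟩ = B}

theorem mem_subtreeRegion_iff {B : ↥(anchoredTreeSet E w t)} {x : ↥(insideCycle E w)}
    (hx : blockOf E w x = B) :
    ↑x ∈ subtreeRegion r c ↔ InSubtree (anchoredTree E w t) r c B := by
  refine ⟨?_, fun h => ⟨x.2, B, h, hx⟩⟩
  rintro ⟨_, B', hB', hxB'⟩
  rwa [Subtype.ext (hx.symm.trans hxB')]

theorem exists_block_of_adj_boundary_subtreeRegion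
    (hanc : ∀ B, InSubtree (anchoredTree E w t) r c B → ↑B ∈ ancillariesOf E w t)
    {a b : V} (ha : a ∈ subtreeRegion r c) (hb : b ∉ subtreeRegion r c) (hab : G.Adj a b) :
    ∃ (ha' : a ∈ insideCycle E w) (hb' : b ∈ insideCycle E w) (B : ↥(anchoredTreeSet E w t)),
      blockOf E w ⟨a, ha'⟩ = c ∧ blockOf E w ⟨b, hb'⟩ = B ∧
        ¬ InSubtree (anchoredTree E w t) r c B := by
  obtain ⟨ha', A, hA, haA⟩ := ha
  have hA_anc := hanc A hA
  have hb' : b ∈ insideCycle E w := mem_insideCycle_of_adj_ancillary ha' (haA ▸ hA_anc) hab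
  have hne : (A : BlockVertex E w) ≠ blockOf E w ⟨b, hb'⟩ :=
    fun h => hb ⟨hb', A, hA, h.symm⟩
  have hadj : (blockGraph E w).Adj A (blockOf E w ⟨b, hb'⟩) :=
    blockGraph_adj_iff.2 ⟨hne, _, _, haA, rfl, hab⟩
  let B : ↥(anchoredTreeSet E w t) := ⟨_, mem_anchoredTreeSet_of_adj hA_anc hadj⟩
  have hB : ¬ InSubtree (anchoredTree E w t) r c B := fun h => hb ⟨hb', B, h, rfl⟩
  have hcA : c = A := hA.eq_of_adj hB hadj.symm
  exact ⟨ha', hb', B, haA.trans (congrArg Subtype.val hcA.symm), rfl, hB⟩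

theorem eq_of_adj_boundary_subtreeRegion
    (hanc : ∀ B, InSubtree (anchoredTree E w t) r c B → ↑B ∈ ancillariesOf E w t)
    {a a' b b' : V} (ha : a ∈ subtreeRegion r c) (hb : b ∉ subtreeRegion r c) (hab : G.Adj a b)
    (ha' : a' ∈ subtreeRegion r c) (hb' : b' ∉ subtreeRegion r c) (hab' : G.Adj a' b') :
    b = b' := by
  obtain ⟨_, _, B, hac, hbB, hB⟩ := exists_block_of_adj_boundary_subtreeRegion hanc ha hb hab
  obtain ⟨_, _, B', hac', hbB', hB'⟩ :=
    exists_block_of_adj_boundary_subtreeRegion hanc ha' hb' hab'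
  obtain ⟨p, hp⟩ := exists_blockGraph_walk_of_not_inSubtree hB hB'
  exact congrArg Subtype.val
    (eq_of_adj_block_of_blockGraph_walk hac hac' hbB hbB' hab hab' p hp)

theorem exists_anchor_inSubtree (hcut : ∀ u : V, (G.induce {v | v ≠ u}).Preconnected)
    (hcr : c ≠ r) : ∃ y, InSubtree (anchoredTree E w t) r c y ∧ ↑y ∈ anchorsOf E w t := by
  by_contra! hno
  have hanc : ∀ B, InSubtree (anchoredTree E w t) r c B → ↑B ∈ ancillariesOf E w t :=
    fun B hB => B.2.resolve_right (hno B hB)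
  obtain ⟨x, hx⟩ : ∃ x, blockOf E w x = c := c.1.exists_rep
  obtain ⟨z, hz⟩ : ∃ z, blockOf E w z = r := r.1.exists_rep
  have hxS : ↑x ∈ subtreeRegion r c := (mem_subtreeRegion_iff hx).2 inSubtree_self
  have hzS : ↑z ∉ subtreeRegion r c := fun h => hcr ((mem_subtreeRegion_iff hz).1 h).eq_root
  have hv0S : v0 ∉ subtreeRegion r c := fun ⟨h, _⟩ => h.1 w.start_mem_support
  have hv0_ne : ∀ y ∈ insideCycle E w, v0 ≠ y := by
    rintro _ hy rfl
    exact hy.1 w.start_mem_support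
  obtain ⟨a, ha, b, hb, hab, -⟩ := exists_adj_boundary_ne (hcut z) hxS hv0S
    (ne_of_mem_of_not_mem hxS hzS) (hv0_ne z z.2)
  obtain ⟨-, hb_inside, -⟩ := exists_block_of_adj_boundary_subtreeRegion hanc ha hb hab
  obtain ⟨a', ha', b', hb', hab', hne⟩ := exists_adj_boundary_ne (hcut b) hxS hv0S
    (ne_of_mem_of_not_mem hxS hb) (hv0_ne b hb_inside)
  exact hne (eq_of_adj_boundary_subtreeRegion hanc ha' hb' hab' ha hb hab)

end AnchoredTree

theorem ancillary_label_between_anchor_labels_general {V : Type u} {G : SimpleGraph V}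
    (hcut : ∀ u : V, (G.induce {v | v ≠ u}).Preconnected) (E : PlaneEmbedding G)
    {v0 : V} (w : G.Walk v0 v0) (t : TreeIndex E w)
    (r : ↥(anchoredTreeSet E w t)) (hr : ↑r ∈ anchorsOf E w t)
    (lab : ↥(anchoredTreeSet E w t) → ℕ)
    (hlab : IsPreorderLabeling (anchoredTree E w t) r lab)
    (c : ↥(anchoredTreeSet E w t)) (hc : ↑c ∈ ancillariesOf E w t) :
    (∃ x : ↥(anchoredTreeSet E w t), ↑x ∈ anchorsOf E w t ∧ lab x < lab c) ∧
    (∃ y : ↥(anchoredTreeSet E w t), ↑y ∈ anchorsOf E w t ∧ lab c < lab y) := by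
  have hne : ∀ y : ↥(anchoredTreeSet E w t), ↑y ∈ anchorsOf E w t → c ≠ y := by
    rintro _ hy rfl
    exact notMem_anchorsOf_of_mem_ancillariesOf hc hy
  obtain ⟨y, hcy, hy⟩ := exists_anchor_inSubtree hcut (hne r hr)
  exact ⟨⟨r, hr, hlab.lt_of_inSubtree inSubtree_root (hne r hr).symm⟩,
    ⟨y, hy, hlab.lt_of_inSubtree hcy (hne y hy)⟩⟩

/-- For each ancillary `c` of a labeled anchored tree (rooted at an
anchor, with labels given by a pre-order traversal) there is an anchor with smaller
label and an anchor with greater label. -/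
theorem ancillary_label_between_anchor_labels {V : Type u} {G : SimpleGraph V}
    (hbic : G.IsBiconnected) (hdeg : G.MaxDegreeLE 4) (E : PlaneEmbedding G)
    {v0 : V} (w : G.Walk v0 v0) (hw : w.IsCycle) (t : TreeIndex E w)
    (r : ↥(anchoredTreeSet E w t)) (hr : ↑r ∈ anchorsOf E w t)
    (lab : ↥(anchoredTreeSet E w t) → ℕ)
    (hlab : IsPreorderLabeling (anchoredTree E w t) r lab)
    (c : ↥(anchoredTreeSet E w t)) (hc : ↑c ∈ ancillariesOf E w t) :
    (∃ x : ↥(anchoredTreeSet E w t), ↑x ∈ anchorsOf E w t ∧ lab x < lab c) ∧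
    (∃ y : ↥(anchoredTreeSet E w t), ↑y ∈ anchorsOf E w t ∧ lab c < lab y) :=
  ancillary_label_between_anchor_labels_general (fun u => (hbic.2.2 u).preconnected) E w t r hr lab
    hlab c hc
end
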